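/- For every t ≥ 1, the matrix M₂(t) and the vector φ(t) have their nonzero rows in exactly the same positions: for every delay-node index k, row k of M₂(t) is nonzero if and only if φ_k(t) = 1. -/

import Mathlib

open Matrix Filter BigOperators
open scoped Classical

noncomputable section

/-- A directed graph on `Fin n` with `m` directed edges, edge `e` going from
`src e` to `tgt e`. -/
structure DGraph (n m : ℕ) where
  src : Fin m → Fin n
  tgt : Fin m → Fin n

/-- Hypotheses of the random-delay consensus model: no self-loops, distinct edges,
`P` row stochastic respecting `G` (hence with positive diagonal), and `G` strongly
connected. -/
structure DGraph.Valid {n m : ℕ} (G : DGraph n m) (P : Matrix (Fin n) (Fin n) ℝ) : Prop where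
  noSelf : ∀ e, G.src e ≠ G.tgt e
  edgeInj : ∀ e e', G.src e = G.src e' → G.tgt e = G.tgt e' → e = e'
  nonneg : ∀ i j, 0 ≤ P i j
  rowSum : ∀ i, ∑ j, P i j = 1
  support : ∀ i j, 0 < P i j ↔ i = j ∨ ∃ e, G.src e = j ∧ G.tgt e = i
  connected : ∀ i j : Fin n,
    Relation.ReflTransGen (fun a b => ∃ e, G.src e = a ∧ G.tgt e = b) i j

/-- Delay nodes: for every directed edge `e : Fin m`, every chain-length index
`ℓ : Fin B` (the parallel chain modelling a delay of `ℓ.1 + 1`), and every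
position `k : Fin B` with `k ≤ ℓ` along that chain.  There are `m·B(B+1)/2`
of them in total. -/
def DelayNode (m B : ℕ) : Type :=
  {q : Fin m × Fin B × Fin B // q.2.2.1 ≤ q.2.1.1}

instance (m B : ℕ) : Fintype (DelayNode m B) := by
  unfold DelayNode; infer_instance

instance (m B : ℕ) : DecidableEq (DelayNode m B) := by
  unfold DelayNode; infer_instance

namespace RandomDelay

variable {n m B : ℕ}

/-- The edge a delay node belongs to. -/
def edgeOf (d : DelayNode m B) : Fin m := d.val.1
/-- The chain (of length `lenIdx d + 1`) a delay node belongs to. -/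
def lenIdx (d : DelayNode m B) : ℕ := d.val.2.1.1
/-- The (0-indexed) position of a delay node along its chain. -/
def posIdx (d : DelayNode m B) : ℕ := d.val.2.2.1
/-- `d` is the terminal node of its chain. -/
def isTerminal (d : DelayNode m B) : Prop := d.val.2.2 = d.val.2.1

/-- The fixed block-diagonal forward-shift matrix `C`: a message at position `k`
of a chain moves to position `k+1` of the same chain. -/
def Cmat (m B : ℕ) : Matrix (DelayNode m B) (DelayNode m B) ℝ := fun d d' =>
  if d.val.1 = d'.val.1 ∧ d.val.2.1 = d'.val.2.1 ∧ posIdx d = posIdx d' + 1 then 1 else 0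

/-- The fixed delivery matrix `J`: `J i d = 1` iff `d` is the terminal node of a
chain on an edge pointing into compute node `i`. -/
def Jmat (G : DGraph n m) (B : ℕ) : Matrix (Fin n) (DelayNode m B) ℝ := fun i d =>
  if G.tgt (edgeOf d) = i ∧ isTerminal d then 1 else 0

/-- `L(t)`: zero-delay deliveries.  `L t i j = 1` iff at iteration `t` node `j`
sends its message on the edge `j → i` with zero delay. -/
def Lmat (G : DGraph n m) (del : ℕ → Fin m → Fin (B + 1)) (t : ℕ) :
    Matrix (Fin n) (Fin n) ℝ := fun i j =>
  if ∃ e, G.src e = j ∧ G.tgt e = i ∧ (del t e).1 = 0 then 1 else 0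

/-- `R(t)`: routing of messages into delay chains.  `R t d j = 1` iff `d` is the
first node of the chain of length `ℓ+1` on an edge out of `j`, and at iteration
`t` node `j`'s message on that edge is assigned delay `ℓ+1`. -/
def Rmat (G : DGraph n m) (del : ℕ → Fin m → Fin (B + 1)) (t : ℕ) :
    Matrix (DelayNode m B) (Fin n) ℝ := fun d j =>
  if G.src (edgeOf d) = j ∧ posIdx d = 0 ∧ (del t (edgeOf d)).1 = lenIdx d + 1 then 1 else 0

/-- Occupancy vector: `φ 0 = 0` and `φ t = R(t)·1 + C·φ(t-1)`. -/
def phi (G : DGraph n m) (del : ℕ → Fin m → Fin (B + 1)) : ℕ → DelayNode m B → ℝ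
  | 0 => fun _ => 0
  | t + 1 => Rmat G del (t + 1) *ᵥ (fun _ => 1) + Cmat m B *ᵥ phi G del t

/-- `ŵ_{ij}(t)`: the number of delay chains from `j` to `i` whose terminal node is
occupied at time `t - 1`, i.e. the number of delayed messages `i` receives from `j`
at iteration `t`. -/
def wgt (G : DGraph n m) (del : ℕ → Fin m → Fin (B + 1)) (t : ℕ) (i j : Fin n) : ℕ :=
  (Finset.univ.filter (fun d : DelayNode m B =>
    G.tgt (edgeOf d) = i ∧ G.src (edgeOf d) = j ∧ isTerminal d ∧
      phi G del (t - 1) d = 1)).card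

/-- Total number of messages (delayed plus undelayed) that `i` receives from `j`
at iteration `t`, as a real number. -/
def denom (G : DGraph n m) (del : ℕ → Fin m → Fin (B + 1)) (t : ℕ) (i j : Fin n) : ℝ :=
  (wgt G del t i j : ℝ) + Lmat G del t i j

/-- `P̄[L(t)]`: each entry `1` of `L(t)` (a zero-delay message from `j` to `i`) is
replaced with the weight `P i j / (ŵ_{ij} + L_{ij}(t))`. -/
def PLmat (G : DGraph n m) (P : Matrix (Fin n) (Fin n) ℝ)
    (del : ℕ → Fin m → Fin (B + 1)) (t : ℕ) : Matrix (Fin n) (Fin n) ℝ := fun i j =>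
  Lmat G del t i j * (P i j / denom G del t i j)

/-- `P̄[φ(t-1)]`: each entry `1` of `J·diag(φ(t-1))` (a delayed message from `j`
delivered to `i`) is replaced with the weight `P i j / (ŵ_{ij} + L_{ij}(t))`. -/
def PFmat (G : DGraph n m) (P : Matrix (Fin n) (Fin n) ℝ)
    (del : ℕ → Fin m → Fin (B + 1)) (t : ℕ) : Matrix (Fin n) (DelayNode m B) ℝ := fun i d =>
  Jmat G B i d * phi G del (t - 1) d *
    (P i (G.src (edgeOf d)) / denom G del t i (G.src (edgeOf d)))

/-- Top-left block `P̂₁₁(t) = I − diag(P̄[φ(t−1)]·1_b + P̄[L(t)]·1_n) + P̄[L(t)]`. -/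
def P11 (G : DGraph n m) (P : Matrix (Fin n) (Fin n) ℝ)
    (del : ℕ → Fin m → Fin (B + 1)) (t : ℕ) : Matrix (Fin n) (Fin n) ℝ :=
  1 - Matrix.diagonal (fun i => (∑ d, PFmat G P del t i d) + (∑ j, PLmat G P del t i j))
    + PLmat G P del t

/-- The delayed transition matrix
`P̂(t) = [[P̂₁₁(t), P̄[φ(t−1)]], [R(t), C]]`. -/
def Phat (G : DGraph n m) (P : Matrix (Fin n) (Fin n) ℝ)
    (del : ℕ → Fin m → Fin (B + 1)) (t : ℕ) :
    Matrix (Fin n ⊕ DelayNode m B) (Fin n ⊕ DelayNode m B) ℝ :=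
  Matrix.fromBlocks (P11 G P del t) (PFmat G P del t) (Rmat G del t) (Cmat m B)

/-- The state: `x̂(0) = (x(0), 0_b)` and `x̂(t) = P̂(t)·x̂(t−1)`. -/
def xhat (G : DGraph n m) (P : Matrix (Fin n) (Fin n) ℝ)
    (del : ℕ → Fin m → Fin (B + 1)) (x0 : Fin n → ℝ) :
    ℕ → (Fin n ⊕ DelayNode m B) → ℝ
  | 0 => Sum.elim x0 (fun _ => 0)
  | t + 1 => Phat G P del (t + 1) *ᵥ xhat G P del x0 t

/-- The product `M(t) = P̂(t)·P̂(t−1)⋯P̂(1)` (with `M(0) = I`). -/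
def Mprod (G : DGraph n m) (P : Matrix (Fin n) (Fin n) ℝ)
    (del : ℕ → Fin m → Fin (B + 1)) :
    ℕ → Matrix (Fin n ⊕ DelayNode m B) (Fin n ⊕ DelayNode m B) ℝ
  | 0 => 1
  | t + 1 => Phat G P del (t + 1) * Mprod G P del t

/-- Top-left `n × n` block of `M(t)`. -/
def M1 (G : DGraph n m) (P : Matrix (Fin n) (Fin n) ℝ)
    (del : ℕ → Fin m → Fin (B + 1)) (t : ℕ) : Matrix (Fin n) (Fin n) ℝ :=
  fun i j => Mprod G P del t (Sum.inl i) (Sum.inl j)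

/-- Bottom-left `b × n` block of `M(t)`. -/
def M2 (G : DGraph n m) (P : Matrix (Fin n) (Fin n) ℝ)
    (del : ℕ → Fin m → Fin (B + 1)) (t : ℕ) : Matrix (DelayNode m B) (Fin n) ℝ :=
  fun d j => Mprod G P del t (Sum.inr d) (Sum.inl j)

/-- A node is occupied at time `t` if it is a compute node, or a delay node `d`
with `φ_d(t) = 1`. -/
def occupied (G : DGraph n m) (del : ℕ → Fin m → Fin (B + 1)) (t : ℕ) :
    (Fin n ⊕ DelayNode m B) → Prop
  | Sum.inl _ => True
  | Sum.inr d => phi G del t d = 1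

/-- Maximum of the state over the occupied nodes at time `t`. -/
def occMax (G : DGraph n m) (P : Matrix (Fin n) (Fin n) ℝ)
    (del : ℕ → Fin m → Fin (B + 1)) (x0 : Fin n → ℝ) (t : ℕ) : ℝ :=
  sSup {y : ℝ | ∃ v, occupied G del t v ∧ xhat G P del x0 t v = y}

/-- Minimum of the state over the occupied nodes at time `t`. -/
def occMin (G : DGraph n m) (P : Matrix (Fin n) (Fin n) ℝ)
    (del : ℕ → Fin m → Fin (B + 1)) (x0 : Fin n → ℝ) (t : ℕ) : ℝ :=
  sInf {y : ℝ | ∃ v, occupied G del t v ∧ xhat G P del x0 t v = y}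

end RandomDelay

end

namespace RandomDelay

variable {n m B : ℕ}

/-- A delay node either receives nothing, or receives a copy of the state of a compute node, or
receives a copy of the state of another delay node. -/
theorem Phat_mulVec_inr (G : DGraph n m) (P : Matrix (Fin n) (Fin n) ℝ)
    (del : ℕ → Fin m → Fin (B + 1)) (t : ℕ) (d : DelayNode m B) :
    (∀ f, (Phat G P del t *ᵥ f) (Sum.inr d) = 0) ∨
      (∃ i, ∀ f, (Phat G P del t *ᵥ f) (Sum.inr d) = f (Sum.inl i)) ∨
        ∃ d', ∀ f, (Phat G P del t *ᵥ f) (Sum.inr d) = f (Sum.inr d') := by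
  have expand : ∀ f, (Phat G P del t *ᵥ f) (Sum.inr d) =
      ∑ j, Rmat G del t d j * f (Sum.inl j) + ∑ d', Cmat m B d d' * f (Sum.inr d') := by
    intro f
    simp [Phat, Matrix.mulVec, dotProduct, Fintype.sum_sum_type]
  simp only [expand]
  by_cases hpos : posIdx d = 0
  · have hC : ∀ d', Cmat m B d d' = 0 := by
      intro d'
      simp [Cmat, hpos]
    by_cases hdel : (del t (edgeOf d)).1 = lenIdx d + 1
    · refine Or.inr (Or.inl ⟨G.src (edgeOf d), fun f => ?_⟩)
      simp [hC, Rmat, hpos, hdel]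
    · left
      simp [hC, Rmat, hdel]
  · obtain ⟨⟨e, l, k⟩, hk⟩ := d
    simp only [posIdx] at hpos hk
    refine Or.inr (Or.inr ⟨⟨(e, l, ⟨k.1 - 1, by omega⟩), ?_⟩, fun f => ?_⟩)
    · change k.1 - 1 ≤ l.1
      omega
    · rw [Finset.sum_eq_zero (by simp [Rmat, posIdx, hpos]), zero_add, Finset.sum_eq_single
        ⟨(e, l, ⟨k.1 - 1, by omega⟩), by change k.1 - 1 ≤ l.1; omega⟩]
      · have : k.1 = k.1 - 1 + 1 := by omega
        simp [Cmat, posIdx, ← this]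
      · rintro ⟨⟨e', l', k'⟩, hk'⟩ - hne
        have hC : ¬ (e = e' ∧ l = l' ∧ k.1 = k'.1 + 1) := by
          rintro ⟨rfl, rfl, h⟩
          refine hne (Subtype.ext ?_)
          simp [h]
        exact mul_eq_zero_of_left (if_neg hC) _
      · exact fun h => absurd (Finset.mem_univ _) h

/-- The all-ones state on compute nodes, extended by the occupancy vector. -/
def occupancyState (G : DGraph n m) (del : ℕ → Fin m → Fin (B + 1)) (t : ℕ) :
    Fin n ⊕ DelayNode m B → ℝ :=
  Sum.elim (fun _ => 1) (phi G del t)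

theorem phi_succ_eq_Phat_mulVec (G : DGraph n m) (P : Matrix (Fin n) (Fin n) ℝ)
    (del : ℕ → Fin m → Fin (B + 1)) (t : ℕ) (d : DelayNode m B) :
    phi G del (t + 1) d = (Phat G P del (t + 1) *ᵥ occupancyState G del t) (Sum.inr d) := by
  simp [phi, Phat, occupancyState, Matrix.mulVec, dotProduct, Fintype.sum_sum_type]

theorem phi_eq_zero_or_one (G : DGraph n m) (P : Matrix (Fin n) (Fin n) ℝ)
    (del : ℕ → Fin m → Fin (B + 1)) (t : ℕ) (d : DelayNode m B) :
    phi G del t d = 0 ∨ phi G del t d = 1 := by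
  induction t generalizing d with
  | zero => exact Or.inl rfl
  | succ t ih =>
    rw [phi_succ_eq_Phat_mulVec G P]
    rcases Phat_mulVec_inr G P del (t + 1) d with h | ⟨i, h⟩ | ⟨d', h⟩
    · exact Or.inl (h _)
    · exact Or.inr (h _)
    · rw [h]
      exact ih d'

theorem PFmat_succ_mul_phi (G : DGraph n m) (P : Matrix (Fin n) (Fin n) ℝ)
    (del : ℕ → Fin m → Fin (B + 1)) (t : ℕ) (i : Fin n) (d : DelayNode m B) :
    PFmat G P del (t + 1) i d * phi G del t d = PFmat G P del (t + 1) i d := by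
  rcases phi_eq_zero_or_one G P del t d with h | h <;> simp [PFmat, h]

theorem Phat_mulVec_occupancyState (G : DGraph n m) (P : Matrix (Fin n) (Fin n) ℝ)
    (del : ℕ → Fin m → Fin (B + 1)) (t : ℕ) :
    Phat G P del (t + 1) *ᵥ occupancyState G del t = occupancyState G del (t + 1) := by
  ext (i | d)
  · simp [Phat, occupancyState, Matrix.mulVec, dotProduct, Fintype.sum_sum_type, P11,
      PFmat_succ_mul_phi, Finset.sum_add_distrib, Matrix.one_apply, Matrix.diagonal_apply]
    ring
  · exact (phi_succ_eq_Phat_mulVec G P del t d).symm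

theorem Mprod_mulVec_occupancyState_zero (G : DGraph n m) (P : Matrix (Fin n) (Fin n) ℝ)
    (del : ℕ → Fin m → Fin (B + 1)) (t : ℕ) :
    Mprod G P del t *ᵥ occupancyState G del 0 = occupancyState G del t := by
  induction t with
  | zero => exact Matrix.one_mulVec _
  | succ t ih => rw [Mprod, ← Matrix.mulVec_mulVec, ih, Phat_mulVec_occupancyState]

theorem sum_M2_eq_phi (G : DGraph n m) (P : Matrix (Fin n) (Fin n) ℝ)
    (del : ℕ → Fin m → Fin (B + 1)) (t : ℕ) (d : DelayNode m B) :
    ∑ j, M2 G P del t d j = phi G del t d := by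
  simpa [occupancyState, phi, M2, Matrix.mulVec, dotProduct, Fintype.sum_sum_type] using
    congrFun (Mprod_mulVec_occupancyState_zero G P del t) (Sum.inr d)

theorem M2_eq_zero_of_phi_eq_zero (G : DGraph n m) (P : Matrix (Fin n) (Fin n) ℝ)
    (del : ℕ → Fin m → Fin (B + 1)) (t : ℕ) (d : DelayNode m B) (j : Fin n)
    (hd : phi G del t d = 0) : M2 G P del t d j = 0 := by
  induction t generalizing d with
  | zero => simp [M2, Mprod]
  | succ t ih =>
    rw [phi_succ_eq_Phat_mulVec G P] at hd
    change (Phat G P del (t + 1) *ᵥ fun v => Mprod G P del t v (Sum.inl j)) (Sum.inr d) = 0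
    rcases Phat_mulVec_inr G P del (t + 1) d with h | ⟨i, h⟩ | ⟨d', h⟩
    · exact h _
    · exact absurd ((h _).symm.trans hd) one_ne_zero
    · rw [h] at hd ⊢
      exact ih d' hd

end RandomDelay

open RandomDelay in
/-- **Nonzero rows of `M₂(t)` match the occupancy vector `φ(t)`.**  For every
`t ≥ 1` and every delay node `d`, row `d` of `M₂(t)` is nonzero iff `φ_d(t) = 1`. -/
theorem random_delay_M2_rows_match_phi
    {n m B : ℕ} (hn : 0 < n) (hB : 1 ≤ B)
    (G : DGraph n m) (P : Matrix (Fin n) (Fin n) ℝ) (hV : G.Valid P)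
    (del : ℕ → Fin m → Fin (B + 1)) (t : ℕ) (ht : 1 ≤ t) (d : DelayNode m B) :
    (∃ j, M2 G P del t d j ≠ 0) ↔ phi G del t d = 1 := by
  constructor
  · rintro ⟨j, hj⟩
    exact (phi_eq_zero_or_one G P del t d).resolve_left
      fun h => hj (M2_eq_zero_of_phi_eq_zero G P del t d j h)
  · intro h
    by_contra! hzero
    simpa [hzero, h] using sum_M2_eq_phi G P del t d
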